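/- Mass scaling method of Olovsson et al.: with m = 24 degrees of freedom per element, let K = Σ_{e=1}^N L_e^T·K_e·L_e with each K_e ∈ ℝ^{24×24} symmetric positive semidefinite; for each e let m_e > 0 and set M_e = (m_e/8)·I_24 and E_e = I_3 ⊗ [(β·m_e/56)·(8·I_8 − e·e^T)], where e ∈ ℝ^8 is the all-ones vector and β ≥ 0; let M = Σ_{e=1}^N L_e^T·M_e·L_e and M̄ = Σ_{e=1}^N L_e^T·(M_e + E_e)·L_e. Then: (1) for every i = 1,…,n, λ_i(K, M̄) ≤ λ_i(K, M) ≤ (1 + 8β/7)·λ_i(K, M̄), i.e. 1 ≤ ω_i/ω̄_i ≤ √(1 + 8β/7) wherever ω̄_i > 0; and (2) κ(M̄)/κ(M) ≤ 1 + 8β/7. -/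

import Mathlib

open Matrix Kronecker

/-- The eigenvalues of a symmetric real matrix listed in ascending order with multiplicity. -/
noncomputable def sortedEigs {n : ℕ} (M : Matrix (Fin n) (Fin n) ℝ) : Fin n → ℝ :=
  if h : M.IsHermitian then h.eigenvalues ∘ Tuple.sort h.eigenvalues else 0

-- The generalized eigenvalues `λ_1(A,B) ≤ … ≤ λ_n(A,B)`: the eigenvalues of
-- `B^{-1/2} A B^{-1/2}` in ascending order with multiplicity (`B` positive definite).
open Classical in
open scoped MatrixOrder in
noncomputable def genEigs {n : ℕ} (A B : Matrix (Fin n) (Fin n) ℝ) : Fin n → ℝ :=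
  if hB : B.PosDef then sortedEigs ((CFC.sqrt B)⁻¹ * A * (CFC.sqrt B)⁻¹) else 0

/-- The spectral condition number `κ(A) = λ_max(A)/λ_min(A)`. -/
noncomputable def specCond {n : ℕ} (M : Matrix (Fin (n+1)) (Fin (n+1)) ℝ) : ℝ :=
  sortedEigs M (Fin.last n) / sortedEigs M 0

/-- The Boolean connectivity matrix `L_e` of an element whose local-to-global map is `σ`:
its rows are the standard basis vectors of `ℝ^n` selected by `σ`. -/
def elemL {ι : Type*} {n : ℕ} (σ : ι → Fin n) : Matrix ι (Fin n) ℝ :=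
  Matrix.of fun i j => if σ i = j then 1 else 0

/-!
Two symmetric pencils `(A, B)` and `(A', B')`, diagonalized by congruences, can be compared through
their Rayleigh quotients: the modes of index at most `i` of the first pencil and those of index at
least `i` of the second span spaces whose dimensions add up to one more than that of the whole
space, hence share a nonzero vector. So Loewner bounds `M ≤ M̄ ≤ c • M` between mass matrices give
bounds between eigenvalues. Such Loewner bounds survive assembly, which reduces the theorem to a
single element. There `r I - e eᵀ` (with `r` nodes) is the Laplacian of the complete graph, so it
lies between `0` and `r I`.
-/

section QuadraticForm

variable {m n : Type*} [Fintype m] [Fintype n]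

theorem dotProduct_mulVec_conj {R : Type*} [CommSemiring R] (P : Matrix m n R) (A : Matrix m m R)
    (x : n → R) : (P *ᵥ x) ⬝ᵥ (A *ᵥ (P *ᵥ x)) = x ⬝ᵥ ((Pᵀ * A * P) *ᵥ x) := by
  rw [Matrix.mul_assoc, ← mulVec_mulVec, ← mulVec_mulVec, dotProduct_mulVec x, vecMul_transpose]

open scoped MatrixOrder in
theorem dotProduct_mulVec_le_of_le {A B : Matrix n n ℝ} (h : A ≤ B) (x : n → ℝ) :
    x ⬝ᵥ (A *ᵥ x) ≤ x ⬝ᵥ (B *ᵥ x) := by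
  have hx := (Matrix.le_iff.1 h).dotProduct_mulVec_nonneg x
  rwa [star_trivial, sub_mulVec, dotProduct_sub, sub_nonneg] at hx

theorem exists_ne_zero_mulVec_eq_zero_of_gt_of_lt {R : Type*} [CommRing R] [IsDomain R]
    [LinearOrder n] (C D : Matrix n n R) (i : n) :
    ∃ x ≠ 0, (∀ j, i < j → (C *ᵥ x) j = 0) ∧ ∀ j, j < i → (D *ᵥ x) j = 0 := by
  -- `E` takes the wanted rows of `C` and `D`; its row `i` is left zero, so it is singular.
  let E : Matrix n n R := of fun j => if i < j then C j else if j < i then D j else 0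
  have hE : E.det = 0 := det_eq_zero_of_row_eq_zero i fun j => by simp [E]
  obtain ⟨x, hx, hEx⟩ := exists_mulVec_eq_zero_iff.2 hE
  refine ⟨x, hx, fun j hj => ?_, fun j hj => ?_⟩
  · simpa [E, mulVec, hj] using congrFun hEx j
  · simpa [E, mulVec, hj, hj.not_gt] using congrFun hEx j

end QuadraticForm

section Modal

variable {n : Type*} [Fintype n] [DecidableEq n] {A B A' B' P Q : Matrix n n ℝ} {d d' : n → ℝ}

/-- `P` is a mass-normalized modal matrix of the pencil `(A, B)` with eigenvalues `d`: its columns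
`p_j` satisfy `p_iᵀ A p_j = d_j δ_ij` and `p_iᵀ B p_j = δ_ij`. -/
structure IsModalMatrix (A B P : Matrix n n ℝ) (d : n → ℝ) : Prop where
  transpose_mul_mul_eq_diagonal : Pᵀ * A * P = diagonal d
  transpose_mul_mul_eq_one : Pᵀ * B * P = 1

namespace IsModalMatrix

theorem neg (h : IsModalMatrix A B P d) : IsModalMatrix (-A) B P (-d) where
  transpose_mul_mul_eq_diagonal := by
    rw [Matrix.mul_neg, Matrix.neg_mul, h.transpose_mul_mul_eq_diagonal, diagonal_neg]
    rfl
  transpose_mul_mul_eq_one := h.transpose_mul_mul_eq_one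

theorem submatrix_perm (h : IsModalMatrix A B P d) (e : Equiv.Perm n) :
    IsModalMatrix A B (P.submatrix id e) (d ∘ e) := by
  have conj_submatrix (C : Matrix n n ℝ) :
      (P.submatrix id e)ᵀ * C * P.submatrix id e = (Pᵀ * C * P).submatrix e e := by
    ext i j
    simp [Matrix.mul_apply]
  constructor
  · rw [conj_submatrix, h.transpose_mul_mul_eq_diagonal, submatrix_diagonal_equiv]
  · rw [conj_submatrix, h.transpose_mul_mul_eq_one, submatrix_one_equiv]

theorem of_congruence {C : Matrix n n ℝ} (h : IsModalMatrix (Cᵀ * A * C) (Cᵀ * B * C) P d) :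
    IsModalMatrix A B (C * P) d where
  transpose_mul_mul_eq_diagonal := by
    simpa only [transpose_mul, Matrix.mul_assoc] using h.transpose_mul_mul_eq_diagonal
  transpose_mul_mul_eq_one := by
    simpa only [transpose_mul, Matrix.mul_assoc] using h.transpose_mul_mul_eq_one

theorem mulVec_inv_mulVec (h : IsModalMatrix A B P d) (x : n → ℝ) : P *ᵥ (P⁻¹ *ᵥ x) = x := by
  have hP : IsUnit P := IsUnit.of_mul_eq_one_right _ h.transpose_mul_mul_eq_one
  rw [mulVec_mulVec, mul_nonsing_inv _ ((isUnit_iff_isUnit_det _).1 hP), one_mulVec]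

theorem dotProduct_mulVec_left (h : IsModalMatrix A B P d) (x : n → ℝ) :
    x ⬝ᵥ (A *ᵥ x) = ∑ j, d j * (P⁻¹ *ᵥ x) j ^ 2 := by
  conv_lhs => rw [← h.mulVec_inv_mulVec x]
  rw [dotProduct_mulVec_conj, h.transpose_mul_mul_eq_diagonal]
  simp only [dotProduct, mulVec_diagonal]
  exact Finset.sum_congr rfl fun j _ => by ring

theorem dotProduct_mulVec_right (h : IsModalMatrix A B P d) (x : n → ℝ) :
    x ⬝ᵥ (B *ᵥ x) = ∑ j, (P⁻¹ *ᵥ x) j ^ 2 := by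
  conv_lhs => rw [← h.mulVec_inv_mulVec x]
  rw [dotProduct_mulVec_conj, h.transpose_mul_mul_eq_one, one_mulVec]
  simp only [dotProduct, sq]

theorem dotProduct_mulVec_right_pos (h : IsModalMatrix A B P d) {x : n → ℝ} (hx : x ≠ 0) :
    0 < x ⬝ᵥ (B *ᵥ x) := by
  have hPx : P⁻¹ *ᵥ x ≠ 0 := fun h0 => hx <| by rw [← h.mulVec_inv_mulVec x, h0, mulVec_zero]
  obtain ⟨j, hj⟩ := Function.ne_iff.1 hPx
  rw [h.dotProduct_mulVec_right]
  exact Finset.sum_pos' (fun _ _ => sq_nonneg _) ⟨j, Finset.mem_univ j, sq_pos_of_ne_zero hj⟩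

theorem dotProduct_mulVec_le (h : IsModalMatrix A B P d) {t : ℝ} {x : n → ℝ}
    (hx : ∀ j, t < d j → (P⁻¹ *ᵥ x) j = 0) : x ⬝ᵥ (A *ᵥ x) ≤ t * (x ⬝ᵥ (B *ᵥ x)) := by
  rw [h.dotProduct_mulVec_left, h.dotProduct_mulVec_right, Finset.mul_sum]
  refine Finset.sum_le_sum fun j _ => ?_
  rcases lt_or_ge t (d j) with htd | hdt
  · simp [hx j htd]
  · gcongr

theorem le_dotProduct_mulVec (h : IsModalMatrix A B P d) {t : ℝ} {x : n → ℝ}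
    (hx : ∀ j, d j < t → (P⁻¹ *ᵥ x) j = 0) : t * (x ⬝ᵥ (B *ᵥ x)) ≤ x ⬝ᵥ (A *ᵥ x) := by
  have hneg := h.neg.dotProduct_mulVec_le (t := -t) fun j hj => hx j (neg_lt_neg_iff.1 hj)
  rw [neg_mulVec, dotProduct_neg] at hneg
  linarith

theorem exists_ne_zero_dotProduct_mulVec_le [LinearOrder n] (h : IsModalMatrix A B P d)
    (h' : IsModalMatrix A' B' Q d') (hd : Monotone d) (hd' : Monotone d') (i : n) :
    ∃ x ≠ 0, x ⬝ᵥ (A *ᵥ x) ≤ d i * (x ⬝ᵥ (B *ᵥ x)) ∧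
      d' i * (x ⬝ᵥ (B' *ᵥ x)) ≤ x ⬝ᵥ (A' *ᵥ x) := by
  obtain ⟨x, hx, hPx, hQx⟩ := exists_ne_zero_mulVec_eq_zero_of_gt_of_lt P⁻¹ Q⁻¹ i
  exact ⟨x, hx, h.dotProduct_mulVec_le fun j hj => hPx j (hd.reflect_lt hj),
    h'.le_dotProduct_mulVec fun j hj => hQx j (hd'.reflect_lt hj)⟩

theorem eigenvalue_le_of_forall_rayleigh_le [LinearOrder n] (h : IsModalMatrix A B P d)
    (h' : IsModalMatrix A' B' Q d') (hd : Monotone d) (hd' : Monotone d') {i : n} {t : ℝ}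
    (hle : ∀ x, x ⬝ᵥ (A *ᵥ x) ≤ d i * (x ⬝ᵥ (B *ᵥ x)) → x ⬝ᵥ (A' *ᵥ x) ≤ t * (x ⬝ᵥ (B' *ᵥ x))) :
    d' i ≤ t := by
  obtain ⟨x, hx, hxA, hxA'⟩ := h.exists_ne_zero_dotProduct_mulVec_le h' hd hd' i
  exact le_of_mul_le_mul_right (hxA'.trans (hle x hxA)) (h'.dotProduct_mulVec_right_pos hx)

theorem eigenvalue_nonneg (h : IsModalMatrix A B P d) (hA : A.PosSemidef) (i : n) : 0 ≤ d i := by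
  have hdiag : (diagonal d).PosSemidef := by
    rw [← h.transpose_mul_mul_eq_diagonal, ← conjTranspose_eq_transpose_of_trivial]
    exact hA.conjTranspose_mul_mul_same P
  simpa using hdiag.diag_nonneg (i := i)

theorem eigenvalue_pos (h : IsModalMatrix A B P d) (hA : A.PosDef) (i : n) : 0 < d i := by
  have hP : IsUnit P := IsUnit.of_mul_eq_one_right _ h.transpose_mul_mul_eq_one
  have hdiag : (diagonal d).PosDef := by
    rw [← h.transpose_mul_mul_eq_diagonal, ← conjTranspose_eq_transpose_of_trivial]
    exact hA.conjTranspose_mul_mul_same (mulVec_injective_of_isUnit hP)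
  simpa using hdiag.diag_pos (i := i)

end IsModalMatrix

theorem isModalMatrix_eigenvectorUnitary (hA : A.IsHermitian) :
    IsModalMatrix A 1 hA.eigenvectorUnitary hA.eigenvalues := by
  have hU : (hA.eigenvectorUnitary : Matrix n n ℝ)ᵀ = star (hA.eigenvectorUnitary : Matrix n n ℝ) :=
    (conjTranspose_eq_transpose_of_trivial _).symm
  constructor
  · have hdiag := hA.conjStarAlgAut_star_eigenvectorUnitary
    rwa [Unitary.conjStarAlgAut_star_apply, ← hU] at hdiag
  · rw [Matrix.mul_one, hU]
    exact Unitary.coe_star_mul_self _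

end Modal

section SortedEigenvalues

variable {n : ℕ} {A A' B B' : Matrix (Fin n) (Fin n) ℝ}

theorem sortedEigs_monotone (A : Matrix (Fin n) (Fin n) ℝ) : Monotone (sortedEigs A) := by
  unfold sortedEigs
  split_ifs with hA
  · exact Tuple.monotone_sort _
  · exact monotone_const

theorem genEigs_monotone (A B : Matrix (Fin n) (Fin n) ℝ) : Monotone (genEigs A B) := by
  unfold genEigs
  split_ifs with hB
  · exact sortedEigs_monotone _
  · exact monotone_const

theorem exists_isModalMatrix_sortedEigs (hA : A.IsHermitian) :
    ∃ P, IsModalMatrix A 1 P (sortedEigs A) := by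
  rw [sortedEigs, dif_pos hA]
  exact ⟨_, (isModalMatrix_eigenvectorUnitary hA).submatrix_perm _⟩

open scoped MatrixOrder

theorem exists_isModalMatrix_genEigs (hA : A.IsHermitian) (hB : B.PosDef) :
    ∃ P, IsModalMatrix A B P (genEigs A B) := by
  rw [genEigs, dif_pos hB]
  set S := CFC.sqrt B
  have hSS : S * S = B := CFC.sqrt_mul_sqrt_self B hB.posSemidef.nonneg
  have hS : S.IsHermitian := (CFC.sqrt_nonneg B).posSemidef.isHermitian
  have hSinv : (S⁻¹)ᵀ = S⁻¹ := (conjTranspose_eq_transpose_of_trivial _).symm.trans hS.inv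
  have hdet : IsUnit S.det := by
    refine isUnit_iff_ne_zero.2 fun h0 => hB.det_pos.ne' ?_
    rw [← hSS, det_mul, h0, mul_zero]
  have hB_one : (S⁻¹)ᵀ * B * S⁻¹ = 1 := by
    rw [hSinv, ← hSS, ← Matrix.mul_assoc, nonsing_inv_mul _ hdet, Matrix.one_mul,
      mul_nonsing_inv _ hdet]
  have hC : ((S⁻¹)ᵀ * A * S⁻¹).IsHermitian := by
    rw [← conjTranspose_eq_transpose_of_trivial]
    exact isHermitian_conjTranspose_mul_mul _ hA
  obtain ⟨P, hP⟩ := exists_isModalMatrix_sortedEigs hC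
  refine ⟨S⁻¹ * P, .of_congruence ?_⟩
  rw [hB_one]
  rwa [hSinv] at hP ⊢

theorem genEigs_nonneg (hA : A.PosSemidef) (hB : B.PosDef) (i : Fin n) : 0 ≤ genEigs A B i := by
  obtain ⟨P, hP⟩ := exists_isModalMatrix_genEigs hA.isHermitian hB
  exact hP.eigenvalue_nonneg hA i

theorem sortedEigs_pos (hA : A.PosDef) (i : Fin n) : 0 < sortedEigs A i := by
  obtain ⟨P, hP⟩ := exists_isModalMatrix_sortedEigs hA.isHermitian
  exact hP.eigenvalue_pos hA i

theorem genEigs_le_mul_of_le_smul {c : ℝ} (hA : A.PosSemidef) (hB : B.PosDef) (hB' : B'.PosDef)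
    (h : B ≤ c • B') (i : Fin n) : genEigs A B' i ≤ c * genEigs A B i := by
  obtain ⟨P, hP⟩ := exists_isModalMatrix_genEigs hA.isHermitian hB
  obtain ⟨Q, hQ⟩ := exists_isModalMatrix_genEigs hA.isHermitian hB'
  refine hP.eigenvalue_le_of_forall_rayleigh_le hQ (genEigs_monotone A B) (genEigs_monotone A B')
    fun x hx => ?_
  have hBx := dotProduct_mulVec_le_of_le h x
  rw [smul_mulVec, dotProduct_smul, smul_eq_mul] at hBx
  calc x ⬝ᵥ (A *ᵥ x) ≤ genEigs A B i * (x ⬝ᵥ (B *ᵥ x)) := hx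
    _ ≤ genEigs A B i * (c * (x ⬝ᵥ (B' *ᵥ x))) :=
      mul_le_mul_of_nonneg_left hBx (genEigs_nonneg hA hB i)
    _ = c * genEigs A B i * (x ⬝ᵥ (B' *ᵥ x)) := by ring

theorem sortedEigs_le_mul_of_le_smul {c : ℝ} (hc : 0 ≤ c) (hA : A.IsHermitian)
    (hA' : A'.IsHermitian) (h : A ≤ c • A') (i : Fin n) :
    sortedEigs A i ≤ c * sortedEigs A' i := by
  obtain ⟨P, hP⟩ := exists_isModalMatrix_sortedEigs hA
  obtain ⟨Q, hQ⟩ := exists_isModalMatrix_sortedEigs hA'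
  refine hQ.eigenvalue_le_of_forall_rayleigh_le hP (sortedEigs_monotone A') (sortedEigs_monotone A)
    fun x hx => ?_
  have hAx := dotProduct_mulVec_le_of_le h x
  rw [smul_mulVec, dotProduct_smul, smul_eq_mul] at hAx
  calc x ⬝ᵥ (A *ᵥ x) ≤ c * (x ⬝ᵥ (A' *ᵥ x)) := hAx
    _ ≤ c * (sortedEigs A' i * (x ⬝ᵥ (1 *ᵥ x))) := mul_le_mul_of_nonneg_left hx hc
    _ = c * sortedEigs A' i * (x ⬝ᵥ (1 *ᵥ x)) := by ring

end SortedEigenvalues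

section MassScaling

open scoped MatrixOrder

variable {n : ℕ} {K M Mbar : Matrix (Fin (n + 1)) (Fin (n + 1)) ℝ} {c : ℝ}

theorem specCond_div_specCond_le (hc : 0 ≤ c) (hM : M.PosDef) (hMbar : Mbar.PosDef)
    (hle : M ≤ Mbar) (hge : Mbar ≤ c • M) : specCond Mbar / specCond M ≤ c := by
  have hmin : sortedEigs M 0 ≤ sortedEigs Mbar 0 := by
    simpa only [one_mul] using sortedEigs_le_mul_of_le_smul zero_le_one hM.isHermitian
      hMbar.isHermitian (hle.trans_eq (one_smul ℝ Mbar).symm) 0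
  have hmax : sortedEigs Mbar (Fin.last n) ≤ c * sortedEigs M (Fin.last n) :=
    sortedEigs_le_mul_of_le_smul hc hMbar.isHermitian hM.isHermitian hge _
  have hM_min := sortedEigs_pos hM 0
  have hM_max := sortedEigs_pos hM (Fin.last n)
  rw [specCond, specCond, div_le_iff₀ (by positivity), ← mul_div_assoc]
  exact div_le_div₀ (by positivity) hmax hM_min hmin

theorem one_le_sqrt_div_sqrt_and_sqrt_div_sqrt_le {a b : ℝ} (hb : 0 < b) (hba : b ≤ a)
    (hac : a ≤ c * b) :
    1 ≤ √a / √b ∧ √a / √b ≤ √c := by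
  rw [← Real.sqrt_div' a hb.le]
  exact ⟨Real.one_le_sqrt.2 ((one_le_div hb).2 hba), Real.sqrt_le_sqrt ((div_le_iff₀ hb).2 hac)⟩

theorem mass_scaling_bounds (hc : 0 ≤ c) (hK : K.PosSemidef) (hM : M.PosDef) (hle : M ≤ Mbar)
    (hge : Mbar ≤ c • M) :
    (∀ i, (genEigs K Mbar i ≤ genEigs K M i ∧ genEigs K M i ≤ c * genEigs K Mbar i) ∧
      (0 < genEigs K Mbar i →
        1 ≤ √(genEigs K M i) / √(genEigs K Mbar i) ∧
        √(genEigs K M i) / √(genEigs K Mbar i) ≤ √c)) ∧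
    specCond Mbar / specCond M ≤ c := by
  have hMbar : Mbar.PosDef := by
    simpa only [add_sub_cancel] using hM.add_posSemidef (Matrix.le_iff.1 hle)
  refine ⟨fun i => ?_, specCond_div_specCond_le hc hM hMbar hle hge⟩
  have hlower : genEigs K Mbar i ≤ genEigs K M i := by
    simpa only [one_mul] using
      genEigs_le_mul_of_le_smul hK hM hMbar (hle.trans_eq (one_smul ℝ Mbar).symm) i
  have hupper : genEigs K M i ≤ c * genEigs K Mbar i := genEigs_le_mul_of_le_smul hK hMbar hM hge i
  refine ⟨⟨hlower, hupper⟩, fun hpos => ?_⟩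
  exact one_le_sqrt_div_sqrt_and_sqrt_div_sqrt_le hpos hlower hupper

end MassScaling

section Assembly

theorem elemL_mulVec {ι : Type*} {n : ℕ} (s : ι → Fin n) (x : Fin n → ℝ) :
    elemL s *ᵥ x = x ∘ s := by
  ext i
  simp [elemL, mulVec, dotProduct]

variable {κ ι : Type*} [Fintype κ] [Fintype ι] {n : ℕ}

/-- The assembled matrix `∑ e, L_eᵀ A_e L_e` of the element matrices `A e`, where `L_e` is given by
the local-to-global map `σ e`. -/
def assemble (σ : κ → ι → Fin n) (A : κ → Matrix ι ι ℝ) : Matrix (Fin n) (Fin n) ℝ :=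
  ∑ e, (elemL (σ e))ᵀ * A e * elemL (σ e)

variable {σ : κ → ι → Fin n} {A B : κ → Matrix ι ι ℝ}

theorem dotProduct_assemble_mulVec (x : Fin n → ℝ) :
    x ⬝ᵥ (assemble σ A *ᵥ x) = ∑ e, (x ∘ σ e) ⬝ᵥ (A e *ᵥ (x ∘ σ e)) := by
  simp_rw [assemble, sum_mulVec, dotProduct_sum, ← elemL_mulVec, dotProduct_mulVec_conj]

theorem assemble_sub : assemble σ (B - A) = assemble σ B - assemble σ A := by
  simp only [assemble, Pi.sub_apply, Matrix.mul_sub, Matrix.sub_mul, Finset.sum_sub_distrib]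

theorem assemble_smul (c : ℝ) : assemble σ (c • A) = c • assemble σ A := by
  simp only [assemble, Pi.smul_apply, Matrix.mul_smul, Matrix.smul_mul, Finset.smul_sum]

theorem assemble_posSemidef (hA : ∀ e, (A e).PosSemidef) : (assemble σ A).PosSemidef := by
  refine posSemidef_sum _ fun e _ => ?_
  rw [← conjTranspose_eq_transpose_of_trivial]
  exact (hA e).conjTranspose_mul_mul_same _

theorem assemble_posDef (hσ : ∀ i, ∃ e j, σ e j = i) (hA : ∀ e, (A e).PosDef) :
    (assemble σ A).PosDef := by
  refine .of_dotProduct_mulVec_pos (assemble_posSemidef fun e => (hA e).posSemidef).isHermitian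
    fun x hx => ?_
  obtain ⟨i, hi⟩ := Function.ne_iff.1 hx
  obtain ⟨e, j, rfl⟩ := hσ i
  have hxe : x ∘ σ e ≠ 0 := Function.ne_iff.2 ⟨j, hi⟩
  rw [star_trivial, dotProduct_assemble_mulVec]
  exact Finset.sum_pos' (fun e _ => (hA e).posSemidef.dotProduct_mulVec_nonneg (x ∘ σ e))
    ⟨e, Finset.mem_univ e, (hA e).dotProduct_mulVec_pos hxe⟩

open scoped MatrixOrder in
theorem assemble_mono (hAB : ∀ e, A e ≤ B e) : assemble σ A ≤ assemble σ B := by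
  rw [Matrix.le_iff, ← assemble_sub]
  exact assemble_posSemidef hAB

end Assembly

section Element

open scoped MatrixOrder

open scoped ComplexOrder in
theorem kronecker_le_kronecker_left {𝕜 l m : Type*} [RCLike 𝕜] [Finite l] [Finite m]
    {C : Matrix l l 𝕜} {A B : Matrix m m 𝕜} (hC : C.PosSemidef) (hAB : A ≤ B) :
    C ⊗ₖ A ≤ C ⊗ₖ B := by
  have hsub : C ⊗ₖ B - C ⊗ₖ A = C ⊗ₖ (B - A) := by
    rw [sub_eq_iff_eq_add, ← kronecker_add, sub_add_cancel]
  rw [Matrix.le_iff, hsub]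
  exact hC.kronecker hAB

variable (δ ν : Type*) [DecidableEq δ] [Fintype ν] [DecidableEq ν]

/-- The matrix `r I - e eᵀ` coupling the `r` nodes of an element along one coordinate direction,
where `e` is the all-ones vector. -/
def nodalLaplacian : Matrix ν ν ℝ :=
  (Fintype.card ν : ℝ) • 1 - of fun _ _ => 1

theorem nodalLaplacian_eq_lapMatrix_top : nodalLaplacian ν = (⊤ : SimpleGraph ν).lapMatrix ℝ := by
  ext a b
  have hcard : 1 ≤ Fintype.card ν := Fintype.card_pos_iff.2 ⟨a⟩
  rcases eq_or_ne a b with rfl | hab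
  · simp [nodalLaplacian, SimpleGraph.lapMatrix, SimpleGraph.degMatrix, Nat.cast_sub hcard]
  · simp [nodalLaplacian, SimpleGraph.lapMatrix, SimpleGraph.degMatrix, hab]

theorem nodalLaplacian_posSemidef : (nodalLaplacian ν).PosSemidef :=
  nodalLaplacian_eq_lapMatrix_top ν ▸ SimpleGraph.posSemidef_lapMatrix ℝ ⊤

theorem nodalLaplacian_le_card_smul_one : nodalLaplacian ν ≤ (Fintype.card ν : ℝ) • 1 := by
  rw [nodalLaplacian, sub_le_self_iff, Matrix.nonneg_iff_posSemidef]
  have hJ : (of fun _ _ => 1 : Matrix ν ν ℝ) = vecMulVec 1 (star 1) := by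
    ext
    simp [vecMulVec_apply]
  rw [hJ]
  exact posSemidef_vecMulVec_self_star 1

variable [Finite δ]

theorem one_kronecker_smul_nodalLaplacian_nonneg {b : ℝ} (hb : 0 ≤ b) :
    0 ≤ (1 : Matrix δ δ ℝ) ⊗ₖ (b • nodalLaplacian ν) :=
  (PosSemidef.one.kronecker ((nodalLaplacian_posSemidef ν).smul hb)).nonneg

theorem one_kronecker_smul_nodalLaplacian_le {b : ℝ} (hb : 0 ≤ b) :
    (1 : Matrix δ δ ℝ) ⊗ₖ (b • nodalLaplacian ν) ≤ (b * Fintype.card ν) • 1 := by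
  calc (1 : Matrix δ δ ℝ) ⊗ₖ (b • nodalLaplacian ν)
      ≤ (1 : Matrix δ δ ℝ) ⊗ₖ (b • (Fintype.card ν : ℝ) • (1 : Matrix ν ν ℝ)) :=
        kronecker_le_kronecker_left .one
          (smul_le_smul_of_nonneg_left (nodalLaplacian_le_card_smul_one ν) hb)
    _ = (b * Fintype.card ν) • 1 := by rw [smul_smul, kronecker_smul, one_kronecker_one]

end Element

open scoped MatrixOrder in
theorem olovsson_mass_scaling_bounds_general {κ δ ν : Type*} [Fintype κ] [Fintype δ]
    [DecidableEq δ] [Fintype ν] [DecidableEq ν] [Nontrivial ν] {n : ℕ} {β : ℝ} (hβ : 0 ≤ β)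
    {σ : κ → δ × ν → Fin (n + 1)} (hσ : ∀ i, ∃ e j, σ e j = i) {me : κ → ℝ} (hme : ∀ e, 0 < me e)
    {Me Ee : κ → Matrix (δ × ν) (δ × ν) ℝ} (hMe : ∀ e, Me e = (me e / Fintype.card ν) • 1)
    (hEe : ∀ e, Ee e = (1 : Matrix δ δ ℝ) ⊗ₖ
      ((β * me e / (Fintype.card ν * (Fintype.card ν - 1))) • nodalLaplacian ν))
    {K M Mbar : Matrix (Fin (n + 1)) (Fin (n + 1)) ℝ} (hK : K.PosSemidef)
    (hM : M = assemble σ Me) (hMbar : Mbar = assemble σ (Me + Ee)) :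
    (∀ i, (genEigs K Mbar i ≤ genEigs K M i ∧
        genEigs K M i ≤ (1 + Fintype.card ν * β / (Fintype.card ν - 1)) * genEigs K Mbar i) ∧
      (0 < genEigs K Mbar i →
        1 ≤ √(genEigs K M i) / √(genEigs K Mbar i) ∧
        √(genEigs K M i) / √(genEigs K Mbar i) ≤
          √(1 + Fintype.card ν * β / (Fintype.card ν - 1)))) ∧
    specCond Mbar / specCond M ≤ 1 + Fintype.card ν * β / (Fintype.card ν - 1) := by
  have hr : (1 : ℝ) < Fintype.card ν := by exact_mod_cast Fintype.one_lt_card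
  have hr_sub : 0 < (Fintype.card ν : ℝ) - 1 := sub_pos.2 hr
  have hb (e : κ) : 0 ≤ β * me e / (Fintype.card ν * (Fintype.card ν - 1)) := by
    have := hme e
    positivity
  have hMe_pos (e : κ) : (Me e).PosDef := by
    rw [hMe]
    exact PosDef.one.smul (div_pos (hme e) (by positivity))
  have hEe_nonneg (e : κ) : 0 ≤ Ee e := by
    rw [hEe]
    exact one_kronecker_smul_nodalLaplacian_nonneg δ ν (hb e)
  have hEe_le (e : κ) : Ee e ≤ (Fintype.card ν * β / (Fintype.card ν - 1)) • Me e := by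
    rw [hEe, hMe, smul_smul]
    convert one_kronecker_smul_nodalLaplacian_le δ ν (hb e) using 2
    field_simp
  subst hM hMbar
  refine mass_scaling_bounds (by positivity) hK (assemble_posDef hσ hMe_pos)
    (assemble_mono fun e => le_add_of_nonneg_right (hEe_nonneg e)) ?_
  rw [← assemble_smul]
  refine assemble_mono fun e => ?_
  rw [Pi.smul_apply, add_smul, one_smul]
  exact add_le_add_right (hEe_le e) _

/-- **Mass scaling of Olovsson et al. (2005)** (Corollary `bounds_olovsson`).
Elements have `m = 24 = 3·8` degrees of freedom (index type `Fin 3 × Fin 8`). With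
`M_e = (m_e/8)·I_24`, `E_e = I_3 ⊗ ((β·m_e/56)·(8·I_8 − e·eᵀ))` (`e` the all-ones vector,
`β ≥ 0`), `K = Σ_e L_eᵀ·K_e·L_e` (each `K_e ⪰ 0` symmetric), `M = Σ_e L_eᵀ·M_e·L_e` and
`M̄ = Σ_e L_eᵀ·(M_e + E_e)·L_e`, one has for every `i`:
`λ_i(K,M̄) ≤ λ_i(K,M) ≤ (1 + 8β/7)·λ_i(K,M̄)` (equivalently `1 ≤ ω_i/ω̄_i ≤ √(1+8β/7)`
wherever `ω̄_i > 0`), and `κ(M̄)/κ(M) ≤ 1 + 8β/7`. -/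
theorem olovsson_mass_scaling_bounds {N n pmax : ℕ} (hpmax : 0 < pmax)
    (β : ℝ) (hβ : 0 ≤ β)
    (σ : Fin (N+1) → (Fin 3 × Fin 8) → Fin (n+1))
    (hinj : ∀ e, Function.Injective (σ e))
    (hcover : ∀ i : Fin (n+1), ∃ e j, σ e j = i)
    (hp : ∀ i : Fin (n+1), (Finset.univ.filter fun e => ∃ j, σ e j = i).card ≤ pmax)
    (Ke : Fin (N+1) → Matrix (Fin 3 × Fin 8) (Fin 3 × Fin 8) ℝ)
    (hKe : ∀ e, (Ke e).PosSemidef)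
    (me : Fin (N+1) → ℝ) (hme : ∀ e, 0 < me e)
    (Me Ee : Fin (N+1) → Matrix (Fin 3 × Fin 8) (Fin 3 × Fin 8) ℝ)
    (hMe : ∀ e, Me e = (me e / 8) • (1 : Matrix (Fin 3 × Fin 8) (Fin 3 × Fin 8) ℝ))
    (hEe : ∀ e, Ee e = (1 : Matrix (Fin 3) (Fin 3) ℝ) ⊗ₖ
      ((β * me e / 56) • ((8 : ℝ) • (1 : Matrix (Fin 8) (Fin 8) ℝ) -
        Matrix.of fun _ _ => (1 : ℝ))))
    (K M Mbar : Matrix (Fin (n+1)) (Fin (n+1)) ℝ)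
    (hK : K = ∑ e, (elemL (σ e))ᵀ * Ke e * elemL (σ e))
    (hM : M = ∑ e, (elemL (σ e))ᵀ * Me e * elemL (σ e))
    (hMbar : Mbar = ∑ e, (elemL (σ e))ᵀ * (Me e + Ee e) * elemL (σ e)) :
    (∀ i : Fin (n+1),
      (genEigs K Mbar i ≤ genEigs K M i ∧
        genEigs K M i ≤ (1 + 8 * β / 7) * genEigs K Mbar i) ∧
      (0 < genEigs K Mbar i →
        1 ≤ Real.sqrt (genEigs K M i) / Real.sqrt (genEigs K Mbar i) ∧
        Real.sqrt (genEigs K M i) / Real.sqrt (genEigs K Mbar i) ≤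
          Real.sqrt (1 + 8 * β / 7))) ∧
    specCond Mbar / specCond M ≤ 1 + 8 * β / 7 := by
  have hKpos : K.PosSemidef := hK.symm ▸ assemble_posSemidef hKe
  have h7 : (8 : ℝ) - 1 = 7 := by norm_num
  simpa [h7] using olovsson_mass_scaling_bounds_general hβ hcover hme (by simpa using hMe)
    (fun e => by rw [hEe]; norm_num [nodalLaplacian]) hKpos hM hMbar
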